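/- The function x ↦ g₁(x)/Φ(x) = (x·Φ(x) + φ(x))/Φ(x) is strictly increasing on ℝ. Equivalently, since g₁′ = Φ, the map x ↦ x·(g₁⁻¹)′(x) is strictly increasing on (0, ∞). -/

import Mathlib

open MeasureTheory

/-- The standard normal density. -/
noncomputable def normPDF (x : ℝ) : ℝ := Real.exp (-x ^ 2 / 2) / Real.sqrt (2 * Real.pi)

/-- The standard normal cumulative distribution function. -/
noncomputable def normCDF (x : ℝ) : ℝ := ∫ t in Set.Iic x, normPDF t

/-- `g₁(x) = x·Φ(x) + φ(x)`, equal to `E[(Z+x)₊]` for standard normal `Z`. -/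
noncomputable def g1 (x : ℝ) : ℝ := x * normCDF x + normPDF x

/-- `g₂(x) = (x²+1)·Φ(x) + x·φ(x)`, equal to `E[(Z+x)₊²]` for standard normal `Z`. -/
noncomputable def g2 (x : ℝ) : ℝ := (x ^ 2 + 1) * normCDF x + x * normPDF x

/-- The inverse of `g₁` (on its range `(0,∞)`). -/
noncomputable def g1inv : ℝ → ℝ := Function.invFun g1

/-- `g = g₂ ∘ g₁⁻¹`. -/
noncomputable def gfn (t : ℝ) : ℝ := g2 (g1inv t)

lemma normPDF_pos (x : ℝ) : 0 < normPDF x := by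
  unfold normPDF; positivity

lemma normPDF_hasDerivAt (x : ℝ) : HasDerivAt normPDF (-x * normPDF x) x := by
  have h : HasDerivAt (fun x : ℝ => -x ^ 2 / 2) (-x) x := by
    have := ((hasDerivAt_pow 2 x).neg).div_const 2
    exact this.congr_deriv (by simp; ring)
  have h2 := (h.exp).div_const (Real.sqrt (2 * Real.pi))
  exact h2.congr_deriv (by unfold normPDF; ring)

lemma normPDF_cont : Continuous normPDF :=
  continuous_iff_continuousAt.2 fun x => (normPDF_hasDerivAt x).continuousAt

lemma normPDF_integrable : Integrable normPDF := by
  have h := ProbabilityTheory.integrable_gaussianPDFReal 0 1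
  convert h using 1
  funext x
  simp [normPDF, ProbabilityTheory.gaussianPDFReal]
  ring

lemma normCDF_eq (x : ℝ) : normCDF x = normCDF 0 + ∫ t in (0:ℝ)..x, normPDF t := by
  have := intervalIntegral.integral_Iic_sub_Iic (f := normPDF) (μ := volume) (a := 0) (b := x)
    normPDF_integrable.integrableOn normPDF_integrable.integrableOn
  unfold normCDF
  linarith

lemma normCDF_hasDerivAt (x : ℝ) : HasDerivAt normCDF (normPDF x) x := by
  have h : normCDF = fun x => normCDF 0 + ∫ t in (0:ℝ)..x, normPDF t := funext normCDF_eq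
  rw [h]
  exact (intervalIntegral.integral_hasDerivAt_right
    (normPDF_cont.intervalIntegrable _ _)
    (normPDF_cont.stronglyMeasurableAtFilter _ _) normPDF_cont.continuousAt).const_add _

lemma normCDF_tendsto : Filter.Tendsto normCDF Filter.atBot (nhds 0) := by
  have h1 := intervalIntegral_tendsto_integral_Iic (μ := volume) (f := normPDF) 0
    normPDF_integrable.integrableOn (Filter.tendsto_id (x := Filter.atBot))
  have h2 := h1.const_sub (normCDF 0)
  have h3 : normCDF 0 - (∫ x in Set.Iic 0, normPDF x) = 0 := sub_self _
  rw [h3] at h2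
  refine h2.congr fun x => ?_
  rw [normCDF_eq x, id, intervalIntegral.integral_symm 0 x]
  simp

lemma pow_normPDF_tendsto (n : ℕ) :
    Filter.Tendsto (fun x => x ^ n * normPDF x) Filter.atBot (nhds 0) := by
  rw [tendsto_zero_iff_abs_tendsto_zero]
  have h : Filter.Tendsto _ Filter.atBot _ := (tendsto_rpow_abs_mul_exp_neg_mul_sq_cocompact (a := 1 / 2) (by norm_num) n).mono_left
    (by rw [cocompact_eq_atBot_atTop]; exact le_sup_left)
  have h2 := h.div_const (Real.sqrt (2 * Real.pi))
  rw [zero_div] at h2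
  refine h2.congr fun x => ?_
  simp only [Function.comp]
  rw [abs_mul, abs_of_pos (normPDF_pos x), abs_pow, Real.rpow_natCast, normPDF,
    show -(1 / 2 : ℝ) * x ^ 2 = -x ^ 2 / 2 by ring, mul_div_assoc]

lemma normPDF_tendsto : Filter.Tendsto normPDF Filter.atBot (nhds 0) := by
  simpa using pow_normPDF_tendsto 0

lemma pos_of_deriv {f f' : ℝ → ℝ} (hf : ∀ x, HasDerivAt f (f' x) x) (hp : ∀ x, 0 < f' x)
    (ht : Filter.Tendsto f Filter.atBot (nhds 0)) : StrictMono f ∧ ∀ x, 0 < f x := by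
  have hm : StrictMono f := strictMono_of_deriv_pos fun x => by rw [(hf x).deriv]; exact hp x
  exact ⟨hm, fun x => lt_of_le_of_lt (hm.monotone.le_of_tendsto ht (x - 1)) (hm (by linarith))⟩

lemma normCDF_mono : StrictMono normCDF :=
  (pos_of_deriv normCDF_hasDerivAt normPDF_pos normCDF_tendsto).1

lemma normCDF_pos (x : ℝ) : 0 < normCDF x :=
  (pos_of_deriv normCDF_hasDerivAt normPDF_pos normCDF_tendsto).2 x

lemma normCDF_le (x : ℝ) (hx : x ≤ -1) : normCDF x ≤ normPDF x := by
  have hd : ∀ x, HasDerivAt (fun x => normPDF x - normCDF x) (-x * normPDF x - normPDF x) x :=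
    fun x => (normPDF_hasDerivAt x).sub (normCDF_hasDerivAt x)
  have hm : MonotoneOn (fun x => normPDF x - normCDF x) (Set.Iic (-1)) := by
    apply monotoneOn_of_deriv_nonneg (convex_Iic _)
    · exact fun x _ => (hd x).continuousAt.continuousWithinAt
    · exact fun x _ => (hd x).differentiableAt.differentiableWithinAt
    · intro x hx
      rw [interior_Iic] at hx
      rw [(hd x).deriv]
      nlinarith [normPDF_pos x, Set.mem_Iio.1 hx]
  have ht : Filter.Tendsto (fun x => normPDF x - normCDF x) Filter.atBot (nhds 0) := by
    simpa using normPDF_tendsto.sub normCDF_tendsto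
  have : 0 ≤ normPDF x - normCDF x := by
    refine le_of_tendsto ht ?_
    filter_upwards [Filter.eventually_le_atBot x] with y hy
    exact hm (Set.mem_Iic.2 (hy.trans hx)) hx hy
  linarith

lemma pow_normCDF_tendsto (n : ℕ) :
    Filter.Tendsto (fun x => x ^ n * normCDF x) Filter.atBot (nhds 0) := by
  have h := (tendsto_zero_iff_abs_tendsto_zero _).1 (pow_normPDF_tendsto n)
  refine squeeze_zero_norm' ?_ h
  filter_upwards [Filter.eventually_le_atBot (-1)] with x hx
  simp only [Function.comp, Real.norm_eq_abs]
  rw [abs_mul, abs_mul, abs_of_pos (normPDF_pos x), abs_of_pos (normCDF_pos x)]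
  exact mul_le_mul_of_nonneg_left (normCDF_le x hx) (abs_nonneg _)

lemma g1_hasDerivAt (x : ℝ) : HasDerivAt g1 (normCDF x) x := by
  have := ((hasDerivAt_id x).mul (normCDF_hasDerivAt x)).add (normPDF_hasDerivAt x)
  exact this.congr_deriv (by simp)

lemma g1_tendsto : Filter.Tendsto g1 Filter.atBot (nhds 0) := by
  have := (pow_normCDF_tendsto 1).add normPDF_tendsto
  simp only [pow_one, add_zero] at this
  exact this

lemma g1_mono : StrictMono g1 := (pos_of_deriv g1_hasDerivAt normCDF_pos g1_tendsto).1

lemma g1_pos (x : ℝ) : 0 < g1 x := (pos_of_deriv g1_hasDerivAt normCDF_pos g1_tendsto).2 x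

lemma g2_hasDerivAt (x : ℝ) : HasDerivAt g2 (2 * g1 x) x := by
  have := (((hasDerivAt_pow 2 x).add_const 1).mul (normCDF_hasDerivAt x)).add
    ((hasDerivAt_id x).mul (normPDF_hasDerivAt x))
  exact this.congr_deriv (by simp [g1]; ring)

lemma g2_tendsto : Filter.Tendsto g2 Filter.atBot (nhds 0) := by
  have := ((pow_normCDF_tendsto 2).add normCDF_tendsto).add (pow_normPDF_tendsto 1)
  simp only [add_zero] at this
  refine this.congr fun x => ?_
  unfold g2
  ring

lemma g2_pos (x : ℝ) : 0 < g2 x :=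
  (pos_of_deriv g2_hasDerivAt (fun x => mul_pos two_pos (g1_pos x)) g2_tendsto).2 x

lemma disc_pos (x : ℝ) : 0 < normCDF x ^ 2 - normPDF x * g1 x := by
  refine (pos_of_deriv (f := fun x => normCDF x ^ 2 - normPDF x * g1 x)
    (f' := fun x => normPDF x * g2 x) (fun x => ?_)
    (fun x => mul_pos (normPDF_pos x) (g2_pos x)) ?_).2 x
  · have := ((normCDF_hasDerivAt x).pow 2).sub ((normPDF_hasDerivAt x).mul (g1_hasDerivAt x))
    exact this.congr_deriv (by simp [g1, g2]; ring)
  · simpa using (normCDF_tendsto.pow 2).sub (normPDF_tendsto.mul g1_tendsto)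

lemma ratio_mono : StrictMono fun x => g1 x / normCDF x := by
  refine strictMono_of_deriv_pos fun x => ?_
  have h := (g1_hasDerivAt x).div (normCDF_hasDerivAt x) (normCDF_pos x).ne'
  have h' : deriv (fun x => g1 x / normCDF x) x = _ := h.deriv
  rw [h']
  have := disc_pos x
  exact div_pos (by linarith) (pow_pos (normCDF_pos x) 2)

lemma g1inv_g1 (x : ℝ) : g1inv (g1 x) = x := Function.leftInverse_invFun g1_mono.injective x

lemma g1_cont : Continuous g1 :=
  continuous_iff_continuousAt.2 fun x => (g1_hasDerivAt x).continuousAt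

lemma normCDF_cont : Continuous normCDF :=
  continuous_iff_continuousAt.2 fun x => (normCDF_hasDerivAt x).continuousAt

lemma g1_surj (y : ℝ) (hy : 0 < y) : ∃ x, g1 x = y := by
  obtain ⟨a, ha⟩ := (g1_tendsto.eventually (gt_mem_nhds hy)).exists
  have hb : y ≤ g1 (y / normCDF 0) := by
    have h0 := normCDF_pos 0
    have hp : 0 < y / normCDF 0 := div_pos hy h0
    have h1 := normCDF_mono hp
    have h2 := mul_le_mul_of_nonneg_left h1.le hp.le
    rw [div_mul_cancel₀ _ h0.ne'] at h2
    have := normPDF_pos (y / normCDF 0)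
    unfold g1
    linarith
  exact mem_range_of_exists_le_of_exists_ge g1_cont ⟨a, ha.le⟩ ⟨_, hb⟩

lemma g1inv_deriv (x : ℝ) : deriv g1inv (g1 x) = (normCDF x)⁻¹ := by
  have hs : HasStrictDerivAt g1 (normCDF x) x :=
    hasStrictDerivAt_of_hasDerivAt_of_continuousAt
      (Filter.Eventually.of_forall g1_hasDerivAt) normCDF_cont.continuousAt
  exact (hs.to_local_left_inverse (normCDF_pos x).ne'
    (Filter.Eventually.of_forall g1inv_g1)).hasDerivAt.deriv

/-- `x ↦ g₁(x)/Φ(x)` is strictly increasing on `ℝ`;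
equivalently, since `g₁′ = Φ`, the map `x ↦ x·(g₁⁻¹)′(x)` is strictly increasing
on `(0,∞)`. -/
theorem stmt_10 :
    (StrictMono fun x => g1 x / normCDF x) ∧
    (∀ x : ℝ, deriv g1 x = normCDF x) ∧
    StrictMonoOn (fun x => x * deriv g1inv x) (Set.Ioi 0) := by
  refine ⟨ratio_mono, fun x => (g1_hasDerivAt x).deriv, ?_⟩
  intro y hy z hz hyz
  obtain ⟨a, rfl⟩ := g1_surj y hy
  obtain ⟨b, rfl⟩ := g1_surj z hz
  simp only [g1inv_deriv, ← div_eq_mul_inv]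
  exact ratio_mono (g1_mono.lt_iff_lt.1 hyz)
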